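/- Let U be an open set of d×d complex matrices, let f : U → ℝ be convex (on a convex neighborhood of each of its points) and differentiable with Hermitian gradient f', let ρ ∈ U be a nonsingular density matrix, and suppose f' is Lipschitz continuous (with respect to the Frobenius norm) on some neighborhood of ρ contained in U. Then for every τ ∈ (0,1) there exists α̃ > 0 such that for all α ∈ (0, α̃), the matrix ρ(α) := ρ_{f'(ρ)}(α) lies in U and satisfies the Armijo condition f(ρ(α)) ≤ f(ρ) + τ · Re⟨f'(ρ), ρ(α) − ρ⟩. -/

import Mathlib

open scoped Matrix ComplexOrder

noncomputable section

/-- The space of `d × d` complex matrices. -/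
abbrev Mat (d : ℕ) := Matrix (Fin d) (Fin d) ℂ

/-- Matrix exponential of a Hermitian matrix, via the real continuous functional calculus
(i.e. the functional calculus on the eigenvalues). -/
noncomputable def mexp {d : ℕ} (A : Mat d) : Mat d := cfc Real.exp A

/-- Matrix logarithm of a positive definite Hermitian matrix, via the real continuous
functional calculus. -/
noncomputable def mlog {d : ℕ} (A : Mat d) : Mat d := cfc Real.log A

/-- A density matrix: Hermitian, positive semidefinite, trace one. -/
def IsDensity {d : ℕ} (ρ : Mat d) : Prop := ρ.PosSemidef ∧ ρ.trace = 1

/-- The real part of the Hilbert–Schmidt inner product `tr (Xᴴ Y)` (which is real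
when `X` and `Y` are Hermitian). -/
noncomputable def hsInner {d : ℕ} (X Y : Mat d) : ℝ := (Matrix.trace (Xᴴ * Y)).re

/-- `tr (σ log σ) = ∑ᵢ λᵢ log λᵢ` over the eigenvalues of `σ` (the convention
`0 log 0 = 0` matches `Real.log 0 = 0`), via the functional calculus for `x ↦ x log x`. -/
noncomputable def trEnt {d : ℕ} (σ : Mat d) : ℝ :=
  (Matrix.trace (cfc (fun x : ℝ => x * Real.log x) σ)).re

/-- The quantum relative entropy `D(σ, ρ) = tr (σ log σ) - tr (σ log ρ)` (for `σ` a
density matrix and `ρ` a nonsingular density matrix). -/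
noncomputable def qRelEnt {d : ℕ} (σ ρ : Mat d) : ℝ :=
  trEnt σ - (Matrix.trace (σ * mlog ρ)).re

/-- The exponentiated-gradient step `ρ_G(α) = c⁻¹ exp (log ρ - α G)` where
`c = tr exp (log ρ - α G)`. -/
noncomputable def egStep {d : ℕ} (ρ G : Mat d) (α : ℝ) : Mat d :=
  (Matrix.trace (mexp (mlog ρ - α • G)))⁻¹ • mexp (mlog ρ - α • G)

attribute [local instance] Matrix.frobeniusNormedAddCommGroup Matrix.frobeniusNormedSpace

/-- `f` is (Fréchet) differentiable at `x` with gradient `g`, with respect to the real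
inner product `Re tr (Xᴴ Y)`: the derivative is `V ↦ Re tr (gᴴ V)`. -/
def HasMatGradientAt {d : ℕ} (f : Mat d → ℝ) (g : Mat d) (x : Mat d) : Prop :=
  ∃ L : Mat d →L[ℝ] ℝ, HasFDerivAt f L x ∧ ∀ V : Mat d, L V = (Matrix.trace (gᴴ * V)).re

/-!
The exponentiated-gradient step `ρ(α)` satisfies the quadratic decrease estimate
`‖ρ(α) - ρ‖² ≤ -α ⟨G, ρ(α) - ρ⟩` for `G = f' ρ`. On positive definite density matrices, whose
spectra lie in `(0, 1]`, the function `log x - x` is increasing, so that `log` is strongly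
monotone for the trace inner product: `‖A - B‖² ≤ ⟨A - B, log A - log B⟩`. For `A = ρ(α)` and
`B = ρ` the difference of the logarithms is `-α G` up to a multiple of the identity, which is
orthogonal to the traceless matrix `ρ(α) - ρ`. The estimate shows that `ρ(α)` tends to `ρ`, and
that the quadratic Taylor remainder of `f` along the step is `O(α)` times the predicted decrease
`-⟨G, ρ(α) - ρ⟩`, hence eventually less than a fraction `1 - τ` of it.
-/

section Armijo

open Filter Topology Asymptotics

variable {E F : Type*} [NormedAddCommGroup E] [NormedSpace ℝ E]
  [NormedAddCommGroup F] [NormedSpace ℝ F]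

theorem isBigO_sub_sub_fderiv_of_isBigO_sub {f : E → F} {f' : E → E →L[ℝ] F} {x₀ : E}
    (hf : ∀ᶠ x in 𝓝 x₀, HasFDerivAt f (f' x) x)
    (hf' : (fun x => f' x - f' x₀) =O[𝓝 x₀] fun x => x - x₀) :
    (fun x => f x - f x₀ - f' x₀ (x - x₀)) =O[𝓝 x₀] fun x => ‖x - x₀‖ ^ 2 := by
  obtain ⟨C, hC, hbound⟩ := hf'.exists_nonneg
  obtain ⟨r, hr, hball⟩ := Metric.eventually_nhds_iff_ball.1 (hf.and hbound.bound)
  refine .of_bound C ?_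
  filter_upwards [Metric.ball_mem_nhds x₀ hr] with x hx
  have hsegment : segment ℝ x₀ x ⊆ Metric.ball x₀ r :=
    (convex_ball x₀ r).segment_subset (Metric.mem_ball_self hr) hx
  have hderiv : ∀ y ∈ segment ℝ x₀ x, ‖f' y - f' x₀‖ ≤ C * ‖x - x₀‖ := fun y hy =>
    (hball y (hsegment hy)).2.trans <|
      mul_le_mul_of_nonneg_left (norm_sub_le_of_mem_segment hy) hC
  calc ‖f x - f x₀ - f' x₀ (x - x₀)‖
      ≤ C * ‖x - x₀‖ * ‖x - x₀‖ :=
        (convex_segment x₀ x).norm_image_sub_le_of_norm_hasFDerivWithin_le'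
          (fun y hy => (hball y (hsegment hy)).1.hasFDerivWithinAt) hderiv
          (left_mem_segment ℝ x₀ x) (right_mem_segment ℝ x₀ x)
    _ = C * ‖‖x - x₀‖ ^ 2‖ := by rw [norm_pow, norm_norm]; ring

theorem isBigO_sub_sub_of_hasFDerivAt_bilin {G : Type*} [NormedAddCommGroup G] [NormedSpace ℝ G]
    {f : E → F} {g : E → G} {x₀ : E} (B : G →L[ℝ] E →L[ℝ] F)
    (hf : ∀ᶠ x in 𝓝 x₀, HasFDerivAt f (B (g x)) x)
    (hg : (fun x => g x - g x₀) =O[𝓝 x₀] fun x => x - x₀) :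
    (fun x => f x - f x₀ - B (g x₀) (x - x₀)) =O[𝓝 x₀] fun x => ‖x - x₀‖ ^ 2 :=
  isBigO_sub_sub_fderiv_of_isBigO_sub hf <| by
    simpa only [map_sub] using (B.isBigO_comp _ _).trans hg

variable {x₀ : E} {ℓ : E →L[ℝ] ℝ} {γ : ℝ → E}

theorem tendsto_of_sq_norm_sub_le_neg_mul
    (hγ : ∀ᶠ α in 𝓝[>] 0, ‖γ α - x₀‖ ^ 2 ≤ -(α * ℓ (γ α - x₀))) :
    Tendsto γ (𝓝[>] 0) (𝓝 x₀) := by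
  have hlin : ∀ᶠ α in 𝓝[>] 0, ‖γ α - x₀‖ ≤ α * ‖ℓ‖ := by
    filter_upwards [hγ, self_mem_nhdsWithin] with α hα (hpos : 0 < α)
    rcases (norm_nonneg (γ α - x₀)).eq_or_lt with hzero | hne
    · rw [← hzero]; positivity
    refine le_of_mul_le_mul_right ?_ hne
    calc ‖γ α - x₀‖ * ‖γ α - x₀‖ ≤ α * -ℓ (γ α - x₀) := by linarith
      _ ≤ α * (‖ℓ‖ * ‖γ α - x₀‖) := by
        gcongr
        exact (neg_le_abs _).trans (ℓ.le_opNorm _)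
      _ = α * ‖ℓ‖ * ‖γ α - x₀‖ := by ring
  have hzero : Tendsto (fun α : ℝ => α * ‖ℓ‖) (𝓝[>] 0) (𝓝 0) :=
    (Continuous.tendsto' (f := (· * ‖ℓ‖)) (by fun_prop) 0 0 (zero_mul _)).mono_left
      nhdsWithin_le_nhds
  exact tendsto_iff_norm_sub_tendsto_zero.2 <|
    squeeze_zero' (.of_forall fun _ => norm_nonneg _) hlin hzero

theorem eventually_armijo_of_isBigO {f : E → ℝ}
    (hf : (fun x => f x - f x₀ - ℓ (x - x₀)) =O[𝓝 x₀] fun x => ‖x - x₀‖ ^ 2)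
    (hγ : ∀ᶠ α in 𝓝[>] 0, ‖γ α - x₀‖ ^ 2 ≤ -(α * ℓ (γ α - x₀))) {τ : ℝ} (hτ : τ < 1) :
    ∀ᶠ α in 𝓝[>] 0, f (γ α) ≤ f x₀ + τ * ℓ (γ α - x₀) := by
  obtain ⟨C, hC, hbound⟩ := hf.exists_nonneg
  have hsmall : ∀ᶠ α : ℝ in 𝓝[>] 0, C * α < 1 - τ :=
    nhdsWithin_le_nhds <| (Continuous.tendsto' (by fun_prop) 0 0 (mul_zero C)).eventually_lt_const
      (sub_pos.2 hτ)
  filter_upwards [hγ, hsmall, (tendsto_of_sq_norm_sub_le_neg_mul hγ).eventually hbound.bound,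
    self_mem_nhdsWithin] with α hα hCα hremainder (hpos : 0 < α)
  rw [norm_pow, norm_norm] at hremainder
  have hdescent : 0 ≤ -ℓ (γ α - x₀) := by
    refine nonneg_of_mul_nonneg_right ?_ hpos
    linarith [sq_nonneg ‖γ α - x₀‖]
  have hquad : C * ‖γ α - x₀‖ ^ 2 ≤ (1 - τ) * -ℓ (γ α - x₀) :=
    calc C * ‖γ α - x₀‖ ^ 2 ≤ C * -(α * ℓ (γ α - x₀)) := by gcongr
      _ = C * α * -ℓ (γ α - x₀) := by ring
      _ ≤ (1 - τ) * -ℓ (γ α - x₀) := by gcongr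
  linarith [(le_abs_self _).trans hremainder]

end Armijo

section FunctionalCalculus

open Matrix

theorem trace_conjTranspose_mul_eq_sum {m n R : Type*} [Fintype m] [Fintype n]
    [NonUnitalNonAssocSemiring R] [StarRing R] (X Y : Matrix m n R) :
    (Xᴴ * Y).trace = ∑ i, ∑ j, star (X i j) * Y i j := by
  simp only [trace, diag_apply, mul_apply, conjTranspose_apply]
  exact Finset.sum_comm

variable {n 𝕜 : Type*} [Fintype n] [DecidableEq n] [RCLike 𝕜] {A B : Matrix n n 𝕜}

theorem posDef_cfc (hA : A.IsHermitian) {f : ℝ → ℝ} (hf : ∀ x ∈ spectrum ℝ A, 0 < f x) :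
    (cfc f A).PosDef := by
  have hcfc : (cfc f A).IsHermitian := cfc_predicate (p := IsSelfAdjoint) f A
  refine hcfc.posDef_iff_eigenvalues_pos.2 fun i => ?_
  have hi := hcfc.eigenvalues_mem_spectrum_real i
  rw [cfc_map_spectrum f A hA.isSelfAdjoint (A.finite_real_spectrum.continuousOn f)] at hi
  obtain ⟨x, hx, hfx⟩ := hi
  exact hfx ▸ hf x hx

theorem spectrum_subset_Ioc_re_trace (hA : A.PosDef) :
    spectrum ℝ A ⊆ Set.Ioc 0 (RCLike.re A.trace) := by
  rw [hA.isHermitian.spectrum_real_eq_range_eigenvalues]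
  rintro _ ⟨i, rfl⟩
  refine ⟨hA.eigenvalues_pos i, ?_⟩
  rw [hA.isHermitian.trace_eq_sum_eigenvalues, ← RCLike.ofReal_sum, RCLike.ofReal_re]
  exact Finset.single_le_sum (fun j _ => (hA.eigenvalues_pos j).le) (Finset.mem_univ i)

theorem star_eigenvectorUnitary_mul_cfc (hA : A.IsHermitian) (f : ℝ → ℝ) :
    star (hA.eigenvectorUnitary : Matrix n n 𝕜) * cfc f A =
      diagonal (fun i => (f (hA.eigenvalues i) : 𝕜)) *
        star (hA.eigenvectorUnitary : Matrix n n 𝕜) := by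
  rw [hA.cfc_eq, Matrix.IsHermitian.cfc, Unitary.conjStarAlgAut_apply, ← mul_assoc, ← mul_assoc,
    Unitary.coe_star_mul_self, one_mul]
  rfl

theorem cfc_mul_eigenvectorUnitary (hA : A.IsHermitian) (f : ℝ → ℝ) :
    cfc f A * (hA.eigenvectorUnitary : Matrix n n 𝕜) =
      (hA.eigenvectorUnitary : Matrix n n 𝕜) *
        diagonal (fun i => (f (hA.eigenvalues i) : 𝕜)) := by
  rw [hA.cfc_eq, Matrix.IsHermitian.cfc, Unitary.conjStarAlgAut_apply, mul_assoc,
    Unitary.coe_star_mul_self, mul_one]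
  rfl

theorem star_eigenvectorUnitary_mul_cfc_sub_cfc_mul_apply (hA : A.IsHermitian)
    (hB : B.IsHermitian) (f : ℝ → ℝ) (i j : n) :
    (star (hA.eigenvectorUnitary : Matrix n n 𝕜) * (cfc f A - cfc f B) *
        (hB.eigenvectorUnitary : Matrix n n 𝕜)) i j =
      (f (hA.eigenvalues i) - f (hB.eigenvalues j) : ℝ) *
        (star (hA.eigenvectorUnitary : Matrix n n 𝕜) *
          (hB.eigenvectorUnitary : Matrix n n 𝕜)) i j := by
  rw [mul_sub, sub_mul, star_eigenvectorUnitary_mul_cfc, mul_assoc, mul_assoc,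
    cfc_mul_eigenvectorUnitary, ← mul_assoc _ _ (diagonal _), Matrix.sub_apply, diagonal_mul,
    mul_diagonal]
  push_cast
  ring

theorem trace_conjTranspose_mul_unitary_conj {U W : Matrix n n 𝕜} (hU : U ∈ unitaryGroup n 𝕜)
    (hW : W ∈ unitaryGroup n 𝕜) (X Y : Matrix n n 𝕜) :
    ((star U * X * W)ᴴ * (star U * Y * W)).trace = (Xᴴ * Y).trace := by
  have hcancel : (star U * X * W)ᴴ * (star U * Y * W) = star W * (Xᴴ * Y) * W := by
    simp only [← star_eq_conjTranspose, star_mul, star_star, mul_assoc]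
    rw [← mul_assoc U, Unitary.mul_star_self_of_mem hU, one_mul]
  rw [hcancel, trace_mul_cycle, Unitary.mul_star_self_of_mem hW, one_mul]

theorem trace_conjTranspose_cfc_sub_cfc_mul (hA : A.IsHermitian) (hB : B.IsHermitian)
    (f g : ℝ → ℝ) :
    ((cfc f A - cfc f B)ᴴ * (cfc g A - cfc g B)).trace =
      ((∑ i, ∑ j, (f (hA.eigenvalues i) - f (hB.eigenvalues j)) *
        (g (hA.eigenvalues i) - g (hB.eigenvalues j)) *
        ‖(star (hA.eigenvectorUnitary : Matrix n n 𝕜) *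
          (hB.eigenvectorUnitary : Matrix n n 𝕜)) i j‖ ^ 2 : ℝ) : 𝕜) := by
  rw [← trace_conjTranspose_mul_unitary_conj hA.eigenvectorUnitary.2 hB.eigenvectorUnitary.2,
    trace_conjTranspose_mul_eq_sum]
  push_cast
  refine Finset.sum_congr rfl fun i _ => Finset.sum_congr rfl fun j _ => ?_
  rw [star_eigenvectorUnitary_mul_cfc_sub_cfc_mul_apply,
    star_eigenvectorUnitary_mul_cfc_sub_cfc_mul_apply, star_mul', ← RCLike.conj_mul]
  simp only [RCLike.star_def, map_sub, RCLike.conj_ofReal]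
  ring

theorem re_trace_conjTranspose_sub_mul_cfc_sub_nonneg (hA : A.IsHermitian) (hB : B.IsHermitian)
    {g : ℝ → ℝ} (hg : MonotoneOn g (spectrum ℝ A ∪ spectrum ℝ B)) :
    0 ≤ RCLike.re ((A - B)ᴴ * (cfc g A - cfc g B)).trace := by
  have hsum := trace_conjTranspose_cfc_sub_cfc_mul hA hB (fun x => x) g
  rw [cfc_id' ℝ A hA.isSelfAdjoint, cfc_id' ℝ B hB.isSelfAdjoint] at hsum
  rw [hsum, RCLike.ofReal_re]
  refine Finset.sum_nonneg fun i _ => Finset.sum_nonneg fun j _ => mul_nonneg ?_ (sq_nonneg _)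
  have hi := Set.mem_union_left (spectrum ℝ B) (hA.eigenvalues_mem_spectrum_real i)
  have hj := Set.mem_union_right (spectrum ℝ A) (hB.eigenvalues_mem_spectrum_real j)
  rcases le_total (hA.eigenvalues i) (hB.eigenvalues j) with hij | hji
  · exact mul_nonneg_of_nonpos_of_nonpos (sub_nonpos.2 hij) (sub_nonpos.2 (hg hi hj hij))
  · exact mul_nonneg (sub_nonneg.2 hji) (sub_nonneg.2 (hg hj hi hji))

end FunctionalCalculus

section ExponentiatedGradient

open Filter Topology Asymptotics

variable {d : ℕ} {H ρ G : Mat d}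

theorem isBilinearMap_hsInner : IsBilinearMap ℝ (hsInner (d := d)) where
  add_left X Y Z := by simp [hsInner, add_mul]
  smul_left c X Y := by simp [hsInner]
  add_right X Y Z := by simp [hsInner, mul_add]
  smul_right c X Y := by simp [hsInner]

/-- The Hilbert–Schmidt inner product as a continuous bilinear map: `hsInnerL G` is the derivative
represented by the gradient `G`. -/
def hsInnerL : Mat d →L[ℝ] Mat d →L[ℝ] ℝ := isBilinearMap_hsInner.toContinuousBilinearMap

theorem hsInnerL_apply (X Y : Mat d) : hsInnerL X Y = hsInner X Y := rfl

theorem hsInner_comm (X Y : Mat d) : hsInner X Y = hsInner Y X := by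
  rw [hsInner, ← Complex.conj_re, ← RCLike.star_def, ← Matrix.trace_conjTranspose,
    Matrix.conjTranspose_mul, Matrix.conjTranspose_conjTranspose, hsInner]

theorem hsInner_one_right (X : Mat d) : hsInner X 1 = X.trace.re := by
  simp [hsInner, Matrix.trace_conjTranspose]

theorem hsInner_self (X : Mat d) : hsInner X X = ‖X‖ ^ 2 := by
  rw [Matrix.frobenius_norm_def, ← Real.sqrt_eq_rpow, Real.sq_sqrt (by positivity), hsInner,
    trace_conjTranspose_mul_eq_sum]
  simp [Complex.conj_mul', ← Complex.ofReal_pow]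

theorem HasMatGradientAt.hasFDerivAt {f : Mat d → ℝ} {G X : Mat d} (h : HasMatGradientAt f G X) :
    HasFDerivAt f (hsInnerL G) X := by
  obtain ⟨L, hL, hLG⟩ := h
  rwa [show L = hsInnerL G from ContinuousLinearMap.ext hLG] at hL

theorem monotoneOn_log_sub_id : MonotoneOn (fun x : ℝ => Real.log x - x) (Set.Ioc 0 1) := by
  intro x hx y hy hxy
  have hlog : Real.log (x / y) ≤ x / y - 1 := Real.log_le_sub_one_of_pos (div_pos hx.1 hy.1)
  rw [Real.log_div hx.1.ne' hy.1.ne'] at hlog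
  have hdiv : y - x ≤ (y - x) / y := le_div_self (sub_nonneg.2 hxy) hy.1 hy.2
  rw [sub_div, div_self hy.1.ne'] at hdiv
  linarith

theorem sq_norm_sub_le_hsInner_mlog_sub {A B : Mat d} (hA : A.PosDef) (hB : B.PosDef)
    (hA1 : A.trace.re ≤ 1) (hB1 : B.trace.re ≤ 1) :
    ‖A - B‖ ^ 2 ≤ hsInner (A - B) (mlog A - mlog B) := by
  have hmono : MonotoneOn (fun x => Real.log x - x) (spectrum ℝ A ∪ spectrum ℝ B) :=
    monotoneOn_log_sub_id.mono <| Set.union_subset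
      ((spectrum_subset_Ioc_re_trace hA).trans (Set.Ioc_subset_Ioc_right hA1))
      ((spectrum_subset_Ioc_re_trace hB).trans (Set.Ioc_subset_Ioc_right hB1))
  have hcfc {X : Mat d} (hX : X.IsHermitian) : cfc (fun x => Real.log x - x) X = mlog X - X := by
    rw [cfc_sub Real.log (fun x => x) X (X.finite_real_spectrum.continuousOn _) (by fun_prop),
      cfc_id' ℝ X hX.isSelfAdjoint, mlog]
  have hnonneg : 0 ≤ hsInner (A - B) (cfc (fun x => Real.log x - x) A -
      cfc (fun x => Real.log x - x) B) :=
    re_trace_conjTranspose_sub_mul_cfc_sub_nonneg hA.isHermitian hB.isHermitian hmono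
  rwa [hcfc hA.isHermitian, hcfc hB.isHermitian, sub_sub_sub_comm, ← hsInnerL_apply, map_sub,
    sub_nonneg, hsInnerL_apply, hsInnerL_apply, hsInner_self] at hnonneg

/-- The Gibbs state `exp H / tr (exp H)` of a Hermitian matrix `H`: the exponentiated-gradient step
`egStep ρ G α` is the Gibbs state of `log ρ - α G`. -/
def gibbs (H : Mat d) : Mat d := (mexp H).trace⁻¹ • mexp H

theorem posDef_mexp (hH : H.IsHermitian) : (mexp H).PosDef :=
  posDef_cfc hH fun x _ => Real.exp_pos x

theorem trace_gibbs [NeZero d] (hH : H.IsHermitian) : (gibbs H).trace = 1 := by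
  rw [gibbs, Matrix.trace_smul, smul_eq_mul, inv_mul_cancel₀ (posDef_mexp hH).trace_pos.ne']

theorem posDef_gibbs [NeZero d] (hH : H.IsHermitian) : (gibbs H).PosDef :=
  (posDef_mexp hH).smul (inv_pos.2 (posDef_mexp hH).trace_pos)

theorem gibbs_eq_cfc (H : Mat d) :
    gibbs H = cfc (fun x => (mexp H).trace.re⁻¹ * Real.exp x) H := by
  have hherm : (mexp H).IsHermitian := cfc_predicate (p := IsSelfAdjoint) Real.exp H
  have htrace : (mexp H).trace = (mexp H).trace.re :=
    (Complex.conj_eq_iff_re.1 (by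
      rw [← RCLike.star_def, ← Matrix.trace_conjTranspose, hherm.eq])).symm
  rw [cfc_const_mul _ Real.exp H (by fun_prop), gibbs, htrace, ← Complex.ofReal_inv,
    Complex.coe_smul]
  rfl

theorem mlog_gibbs [NeZero d] (hH : H.IsHermitian) :
    mlog (gibbs H) = H - Real.log (mexp H).trace.re • (1 : Mat d) := by
  have hpos : 0 < (mexp H).trace.re := (Complex.pos_iff.1 (posDef_mexp hH).trace_pos).1
  calc mlog (gibbs H) = cfc (fun x => Real.log ((mexp H).trace.re⁻¹ * Real.exp x)) H := by
        rw [mlog, gibbs_eq_cfc, ← cfc_comp' Real.log _ H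
          ((H.finite_real_spectrum.image _).continuousOn _) (by fun_prop)]
    _ = cfc (fun x => x - Real.log (mexp H).trace.re) H := by
        refine cfc_congr fun x _ => ?_
        simp only [Real.log_mul (inv_ne_zero hpos.ne') (Real.exp_ne_zero x), Real.log_inv,
          Real.log_exp, neg_add_eq_sub]
    _ = H - Real.log (mexp H).trace.re • (1 : Mat d) := by
        rw [cfc_sub (fun x => x) _ H, cfc_id' ℝ H hH.isSelfAdjoint,
          cfc_const _ H hH.isSelfAdjoint, Algebra.algebraMap_eq_smul_one]

theorem isHermitian_mlog (A : Mat d) : (mlog A).IsHermitian :=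
  cfc_predicate (p := IsSelfAdjoint) Real.log A

theorem sq_norm_egStep_sub_le (hρ : ρ.PosDef) (hρ1 : ρ.trace = 1) (hG : G.IsHermitian) (α : ℝ) :
    ‖egStep ρ G α - ρ‖ ^ 2 ≤ -(α * hsInner G (egStep ρ G α - ρ)) := by
  have : NeZero d := ⟨by rintro rfl; simp at hρ1⟩
  have hH : (mlog ρ - α • G).IsHermitian := (isHermitian_mlog ρ).sub (.smul hG (.all α))
  have htrace : (egStep ρ G α).trace = 1 := trace_gibbs hH
  have hlog : ∃ c : ℝ, mlog (egStep ρ G α) - mlog ρ = -α • G - c • (1 : Mat d) :=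
    ⟨_, by rw [show egStep ρ G α = gibbs _ from rfl, mlog_gibbs hH]; module⟩
  obtain ⟨c, hlog⟩ := hlog
  calc ‖egStep ρ G α - ρ‖ ^ 2
      ≤ hsInner (egStep ρ G α - ρ) (mlog (egStep ρ G α) - mlog ρ) :=
        sq_norm_sub_le_hsInner_mlog_sub (posDef_gibbs hH) hρ (by simp [htrace]) (by simp [hρ1])
    _ = -(α * hsInner (egStep ρ G α - ρ) G) - c * hsInner (egStep ρ G α - ρ) 1 := by
        simp only [hlog, ← hsInnerL_apply, map_sub, map_smul, smul_eq_mul, neg_mul]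
    _ = -(α * hsInner G (egStep ρ G α - ρ)) := by
        rw [hsInner_one_right, Matrix.trace_sub, htrace, hρ1, hsInner_comm _ G]
        simp

theorem stmt_11_general {U : Set (Mat d)} {f : Mat d → ℝ} {f' : Mat d → Mat d} (hU : U ∈ 𝓝 ρ)
    (hgrad : ∀ x ∈ U, HasMatGradientAt f (f' x) x) (hherm : (f' ρ).IsHermitian)
    (hρ : ρ.PosDef) (hρ1 : ρ.trace = 1)
    (hLip : (fun x => f' x - f' ρ) =O[𝓝 ρ] fun x => x - ρ) {τ : ℝ} (hτ : τ < 1) :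
    ∀ᶠ α in 𝓝[>] (0 : ℝ), egStep ρ (f' ρ) α ∈ U ∧
      f (egStep ρ (f' ρ) α) ≤ f ρ + τ * hsInner (f' ρ) (egStep ρ (f' ρ) α - ρ) := by
  have hstep : ∀ᶠ α in 𝓝[>] 0, ‖egStep ρ (f' ρ) α - ρ‖ ^ 2 ≤
      -(α * hsInnerL (f' ρ) (egStep ρ (f' ρ) α - ρ)) :=
    .of_forall (sq_norm_egStep_sub_le hρ hρ1 hherm)
  have hderiv : ∀ᶠ x in 𝓝 ρ, HasFDerivAt f (hsInnerL (f' x)) x :=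
    mem_of_superset hU fun x hx => (hgrad x hx).hasFDerivAt
  exact ((tendsto_of_sq_norm_sub_le_neg_mul hstep).eventually_mem hU).and <|
    eventually_armijo_of_isBigO (isBigO_sub_sub_of_hasFDerivAt_bilin hsInnerL hderiv hLip) hstep hτ

end ExponentiatedGradient

/-- the Armijo condition is satisfied by all sufficiently small step
sizes, for `f` locally convex with locally Lipschitz Hermitian gradient. -/
theorem stmt_11 {d : ℕ} (hd : 0 < d) (U : Set (Mat d)) (hUopen : IsOpen U)
    (f : Mat d → ℝ) (f' : Mat d → Mat d)
    (hlocconv : ∀ x ∈ U, ∃ V : Set (Mat d),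
      V ∈ nhds x ∧ V ⊆ U ∧ Convex ℝ V ∧ ConvexOn ℝ V f)
    (hgrad : ∀ x ∈ U, HasMatGradientAt f (f' x) x)
    (hherm : ∀ x ∈ U, (f' x).IsHermitian)
    (ρ : Mat d) (hρU : ρ ∈ U) (hρ : ρ.PosDef) (hρ1 : ρ.trace = 1)
    (hLip : ∃ V ∈ nhds ρ, V ⊆ U ∧
      ∃ L : ℝ, ∀ x ∈ V, ∀ y ∈ V, ‖f' x - f' y‖ ≤ L * ‖x - y‖) :
    ∀ τ ∈ Set.Ioo (0:ℝ) 1, ∃ αtil > (0:ℝ), ∀ α ∈ Set.Ioo (0:ℝ) αtil,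
      egStep ρ (f' ρ) α ∈ U ∧
        f (egStep ρ (f' ρ) α) ≤ f ρ + τ * hsInner (f' ρ) (egStep ρ (f' ρ) α - ρ) := by
  intro τ hτ
  obtain ⟨V, hV, -, L, hL⟩ := hLip
  exact (nhdsGT_basis 0).eventually_iff.1 <|
    stmt_11_general (hUopen.mem_nhds hρU) hgrad (hherm ρ hρU) hρ hρ1
      (.of_bound L (Filter.mem_of_superset hV fun x hx => hL x hx ρ (mem_of_mem_nhds hV))) hτ.2

end
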